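/- For every natural number n ≥ 15, F_{ε₀}(n) ≤ σ(n+2, 10^(35n²)). -/

import Mathlib

/-! The bound comes from a long descending sequence of ordinals of small norm, coloured in the manner
of Ketonen and Solovay.

*The descent.* Write `dig α γ` for the coefficient of `ω ^ γ` in the Cantor normal form of `α`, and
`Bdd m α` if the coefficients and the numbers of exponents are hereditarily at most `m`.
Unfolding the recursion for `F_α(x)` amounts to descending from `ω ^ α` to `0`. If a clock started at some `i ≥ x` advances by
one at every step, it shows at least `F_α(x)` at the end, and the norm of the current ordinal never
exceeds the clock (`exists_run`). Since `F_{ε₀}(n) = F_{ω_n^{n+1}}(n)`, this yields ordinals `s t`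
below `ω_{n+1}^{n+2}`, strictly decreasing for times `t` from `n + 1` to at least `F_{ε₀}(n)`, with
`Bdd t (s t)` (`exists_descent`).

*The colouring.* For a descending sequence `W`, let `del W t` be the largest exponent at which the
normal forms of `W t` and `W (t + 1)` differ. If `del W` is constant, the coefficient at this exponent
decreases; if it is strictly increasing, all its values are exponents of `W 0`. In both cases
`Bdd h (W 0)` bounds the length of `W` by `h + 1`. If it is strictly decreasing, it is itself a
descending sequence, one level further down the tower of powers of `ω`, starting with an exponent of
`W 0`. Hence `r + 2` consecutive members determine a colour (`col`) such that a sequence below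
`ω_{r+1}^k` with constant colour and `Bdd h (W 0)` has at most `h + (r + 2) ^ 2` members
(`le_of_col_const`).

*The conclusion.* Suppose `N < F_{ε₀}(n)`. Colour an `(n + 2)`-element subset of `{0, …, N - 1}` by
its minimum if this is small, and otherwise by the colour of the descent at the times given by its
members, shifted by `(n + 2) ^ 2 + 1`. Homogeneous sets with more than `n + 2` members then have no
small members, and the shift makes them smaller than their minimum, so none is large
(`Feps0_le_of_PH`). The number of colours is quadratic in `n`, far below `10 ^ (35 * n ^ 2)`.

As `sigmaPH` is an infimum of natural numbers, with `sInf ∅ = 0`, the Paris–Harrington theorem itself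
is needed as well (`exists_PH`).
-/

open Ordinal
open scoped Classical

noncomputable section

/-- `omegaTower m α` is `ω_m^α`: the `m`-fold iterated `ω`-power tower on top of `α`. -/
noncomputable def omegaTower : ℕ → Ordinal.{0} → Ordinal.{0}
  | 0, α => α
  | m + 1, α => omega0 ^ (omegaTower m α)

/-- `ε₀`, the least ordinal `ε` with `ω ^ ε = ε`. -/
noncomputable def eps0 : Ordinal.{0} := Ordinal.nfp (fun a => omega0 ^ a) 0

/-- The fundamental sequence `{α}(n)` for ordinals below `ε₀`:
`{0}(n) = 0`, `{β+1}(n) = β`, and for a limit `α = β + ω^γ·(k+1)` (with `γ > 0` the least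
exponent of the Cantor normal form) we set `{α}(n) = β + ω^γ·k + ω^δ·(n+1)` if `γ = δ+1`
and `{α}(n) = β + ω^γ·k + ω^{{γ}(n)}` if `γ` is a limit.  Here `γ` is recovered as the
largest exponent with `ω^γ ∣ α`, and `β + ω^γ·k = ω^γ · pred (α / ω^γ)`. -/
noncomputable def fundSeq (α : Ordinal.{0}) (n : ℕ) : Ordinal.{0} :=
  if _h0 : α = 0 then 0
  else if hs : ∃ β, α = β + 1 then Classical.choose hs
  else
    let γ : Ordinal := sSup {c : Ordinal | omega0 ^ c ∣ α}
    if hγ : ∃ δ, γ = δ + 1 then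
      omega0 ^ γ * Ordinal.pred (α / omega0 ^ γ) +
        omega0 ^ (Classical.choose hγ) * ((n : Ordinal) + 1)
    else if hlt : γ < α then
      omega0 ^ γ * Ordinal.pred (α / omega0 ^ γ) + omega0 ^ (fundSeq γ n)
    else 0
termination_by α
decreasing_by exact hlt

/-- The step-down relation `β →_n γ`: there is a finite sequence from `β` to `γ`
each step of which descends to the `n`-th member of the fundamental sequence. -/
def stepDown (n : ℕ) (β γ : Ordinal.{0}) : Prop :=
  Relation.ReflTransGen (fun a b => fundSeq a n = b) β γ

/-- The fast-growing hierarchy `F_α` for `α < ε₀`: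
`F_0(x) = x+1`, `F_{α+1}(x) = F_α^[x+1](x)`, `F_λ(x) = F_{{λ}(x)}(x)` for limits. -/
noncomputable def fgh (α : Ordinal.{0}) : ℕ → ℕ :=
  if _h0 : α = 0 then fun x => x + 1
  else if hs : ∃ β, α = β + 1 then fun x => (fgh (Classical.choose hs))^[x + 1] x
  else fun x => if hlt : fundSeq α x < α then fgh (fundSeq α x) x else 0
termination_by α
decreasing_by
  · calc Classical.choose hs < Classical.choose hs + 1 := by
          rw [Ordinal.add_one_eq_succ]; exact Order.lt_succ _
      _ = α := (Classical.choose_spec hs).symm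
  · exact hlt

/-- `F_{ε₀}(x) := F_{ω_{x+1}}(x)`. -/
noncomputable def Feps0 (x : ℕ) : ℕ := fgh (omegaTower (x + 1) 1) x

/-- The inverse `F_{ε₀}^{-1}(x) := max({z ≤ x : F_{ε₀}(z) ≤ x} ∪ {0})`. -/
noncomputable def Feps0Inv (x : ℕ) : ℕ :=
  sSup ({z : ℕ | z ≤ x ∧ Feps0 z ≤ x} ∪ {0})

/-- The slow function `F^⋄_{ε₀}(x) := F_{ω_{F_{ε₀}^{-1}(x)+1}}(x)`. -/
noncomputable def slowFeps0 (x : ℕ) : ℕ := fgh (omegaTower (Feps0Inv x + 1) 1) x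

/-- The slow hierarchy `F^⋄_{ε₀+α}` for `α < ε₀`:
`F^⋄_{ε₀+0} = F^⋄_{ε₀}`, `F^⋄_{ε₀+α+1}(n) = (F^⋄_{ε₀+α})^[n+1](n)`, and
`F^⋄_{ε₀+λ}(n) = F^⋄_{ε₀+{λ}(n)}(n)` for limits `λ`. -/
noncomputable def slowF (α : Ordinal.{0}) : ℕ → ℕ :=
  if _h0 : α = 0 then slowFeps0
  else if hs : ∃ β, α = β + 1 then fun n => (slowF (Classical.choose hs))^[n + 1] n
  else fun n => if hlt : fundSeq α n < α then slowF (fundSeq α n) n else 0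
termination_by α
decreasing_by
  · calc Classical.choose hs < Classical.choose hs + 1 := by
          rw [Ordinal.add_one_eq_succ]; exact Order.lt_succ _
      _ = α := (Classical.choose_spec hs).symm
  · exact hlt

/-- A nonempty finite set of naturals is *large* if its cardinality is at least
its minimum. -/
def IsLargeSet (Y : Finset ℕ) : Prop := ∃ hY : Y.Nonempty, Y.min' hY ≤ Y.card

/-- The Paris–Harrington statement `PH(k, m, n, N)`: every `k`-colouring of the
`n`-element subsets of `{0, …, N-1}` admits a large homogeneous set with at least
`m` elements. -/
def PH (k m n N : ℕ) : Prop :=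
  ∀ f : Finset ℕ → Fin k,
    ∃ Y : Finset ℕ, Y ⊆ Finset.range N ∧ m ≤ Y.card ∧ IsLargeSet Y ∧
      ∀ s t : Finset ℕ, s ⊆ Y → t ⊆ Y → s.card = n → t.card = n → f s = f t

/-- `σ(n, k)`: the least `N` such that every `k`-colouring of the `n`-element subsets of
`{0, …, N-1}` admits a large homogeneous set with at least `n+1` elements. -/
noncomputable def sigmaPH (n k : ℕ) : ℕ := sInf {N | PH k (n + 1) n N}

/-! ### Cantor normal forms -/

theorem omega0_opow_ne (γ : Ordinal.{0}) : ω ^ γ ≠ 0 := opow_ne_zero _ omega0_ne_zero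

theorem ord_div_div (a : Ordinal.{0}) {b c : Ordinal.{0}} (hb : b ≠ 0) (hc : c ≠ 0) :
    a / (b * c) = a / b / c := by
  refine eq_of_forall_le_iff fun d => ?_
  rw [← mul_le_iff_le_div (mul_ne_zero hb hc), ← mul_le_iff_le_div hc, ← mul_le_iff_le_div hb,
    mul_assoc]

/-- `dig α γ` is the coefficient of `ω ^ γ` in the Cantor normal form of `α`, an ordinal below
`ω`. -/
def dig (α γ : Ordinal.{0}) : Ordinal.{0} := α / ω ^ γ % ω

theorem dig_zero_left (c : Ordinal.{0}) : dig 0 c = 0 := by simp [dig]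

theorem dig_of_lt {β c : Ordinal.{0}} (h : β < ω ^ c) : dig β c = 0 := by
  simp [dig, Ordinal.div_eq_zero_of_lt h]

theorem dig_add_of_le {ξ β γ c : Ordinal.{0}} (hξ : ω ^ γ ∣ ξ) (hβ : β < ω ^ γ) (hc : γ ≤ c) :
    dig (ξ + β) c = dig ξ c := by
  obtain ⟨η, rfl⟩ := hξ
  have e : c = γ + (c - γ) := (Ordinal.add_sub_cancel_of_le hc).symm
  have n1 := omega0_opow_ne γ
  rw [dig, dig, e, opow_add, ord_div_div _ n1 (omega0_opow_ne _),
    ord_div_div _ n1 (omega0_opow_ne _), mul_add_div _ n1, Ordinal.div_eq_zero_of_lt hβ, add_zero,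
    mul_div_cancel _ n1]

theorem dig_add_of_lt {ξ γ c : Ordinal.{0}} (β : Ordinal.{0}) (hξ : ω ^ γ ∣ ξ) (hc : c < γ) :
    dig (ξ + β) c = dig β c := by
  obtain ⟨η, rfl⟩ := hξ
  have e : γ = c + 1 + (γ - (c + 1)) :=
    (Ordinal.add_sub_cancel_of_le (Order.add_one_le_of_lt hc)).symm
  rw [dig, dig, e, opow_add, opow_add, opow_one, mul_assoc, mul_assoc,
    mul_add_div _ (omega0_opow_ne c), mul_add_mod_self]

theorem dig_of_dvd {ξ γ c : Ordinal.{0}} (hξ : ω ^ γ ∣ ξ) (hc : c < γ) : dig ξ c = 0 := by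
  simpa [dig_zero_left] using dig_add_of_lt 0 hξ hc

theorem add_one_divMod (η : Ordinal.{0}) : (η + 1) / ω = η / ω ∧ (η + 1) % ω = η % ω + 1 := by
  have h : η + 1 = ω * (η / ω) + (η % ω + 1) := by
    rw [← add_assoc, div_add_mod]
  have h2 : η % ω + 1 < ω := isSuccLimit_omega0.add_one_lt (mod_lt _ omega0_ne_zero)
  constructor
  · rw [h, mul_add_div _ omega0_ne_zero, Ordinal.div_eq_zero_of_lt h2, add_zero]
  · rw [h, mul_add_mod_self, mod_eq_of_lt h2]

theorem dig_add_pow_self {ξ γ : Ordinal.{0}} (hξ : ω ^ γ ∣ ξ) :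
    dig (ξ + ω ^ γ) γ = dig ξ γ + 1 := by
  obtain ⟨η, rfl⟩ := hξ
  rw [dig, dig, ← mul_add_one, mul_div_cancel _ (omega0_opow_ne γ),
    mul_div_cancel _ (omega0_opow_ne γ), (add_one_divMod η).2]

theorem dig_add_pow_of_ne {ξ γ c : Ordinal.{0}} (hξ : ω ^ γ ∣ ξ) (hc : c ≠ γ) :
    dig (ξ + ω ^ γ) c = dig ξ c := by
  rcases lt_or_gt_of_ne hc with h | h
  · rw [dig_add_of_lt _ hξ h, dig_of_dvd dvd_rfl h, dig_of_dvd hξ h]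
  · obtain ⟨η, rfl⟩ := hξ
    have e : c = γ + 1 + (c - (γ + 1)) :=
      (Ordinal.add_sub_cancel_of_le (Order.add_one_le_of_lt h)).symm
    have n1 := omega0_opow_ne γ
    have n2 := omega0_opow_ne (c - (γ + 1))
    rw [dig, dig, e, opow_add, opow_add, opow_one, mul_assoc,
      ord_div_div _ n1 (mul_ne_zero omega0_ne_zero n2),
      ord_div_div _ n1 (mul_ne_zero omega0_ne_zero n2), ← mul_add_one,
      mul_div_cancel _ n1, mul_div_cancel _ n1, ord_div_div _ omega0_ne_zero n2,
      ord_div_div _ omega0_ne_zero n2, (add_one_divMod η).1]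

theorem dig_pow_mul_nat (δ : Ordinal.{0}) (k : ℕ) : dig (ω ^ δ * k) δ = k := by
  rw [dig, mul_div_cancel _ (omega0_opow_ne δ), natCast_mod_omega0]

theorem dig_pow_mul_nat_of_ne {δ c : Ordinal.{0}} (k : ℕ) (h : c ≠ δ) : dig (ω ^ δ * k) c = 0 := by
  rcases lt_or_gt_of_ne h with h | h
  · exact dig_of_dvd (Dvd.intro _ rfl) h
  · exact dig_of_lt (opow_mul_lt_opow (natCast_lt_omega0 k) h)

theorem opow_le_of_dig_ne {α γ : Ordinal.{0}} (h : dig α γ ≠ 0) : ω ^ γ ≤ α := by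
  by_contra hlt
  exact h (dig_of_lt (not_le.1 hlt))

/-- `Bdd m α` bounds the hereditary size of the Cantor normal form of `α` by `m`: all coefficients
are at most `m`, there are at most `m` distinct exponents, and the exponents satisfy the same
condition. Since the predicate is inductive, it forces `α < ε₀`. -/
inductive Bdd (m : ℕ) : Ordinal.{0} → Prop
  | mk (α : Ordinal.{0}) (hd : ∀ γ, dig α γ ≤ m)
      (hs : ∃ S : Finset Ordinal.{0}, S.card ≤ m ∧ ∀ γ, dig α γ ≠ 0 → γ ∈ S)
      (he : ∀ γ, dig α γ ≠ 0 → Bdd m γ) : Bdd m α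

namespace Bdd

theorem dig_le {m : ℕ} {α : Ordinal.{0}} (h : Bdd m α) (γ : Ordinal.{0}) : dig α γ ≤ m := by
  cases h with | mk _ hd hs he => exact hd γ

theorem supp {m : ℕ} {α : Ordinal.{0}} (h : Bdd m α) :
    ∃ S : Finset Ordinal.{0}, S.card ≤ m ∧ ∀ γ, dig α γ ≠ 0 → γ ∈ S := by
  cases h with | mk _ hd hs he => exact hs

theorem exp {m : ℕ} {α γ : Ordinal.{0}} (h : Bdd m α) (hγ : dig α γ ≠ 0) : Bdd m γ := by
  cases h with | mk _ hd hs he => exact he γ hγ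

theorem mono {m m' : ℕ} (hm : m ≤ m') {α : Ordinal.{0}} (h : Bdd m α) : Bdd m' α := by
  induction h with
  | mk α hd hs he ih =>
    obtain ⟨S, h1, h2⟩ := hs
    exact ⟨α, fun γ => (hd γ).trans (by exact_mod_cast hm), ⟨S, h1.trans hm, h2⟩, ih⟩

theorem zero (m : ℕ) : Bdd m 0 :=
  ⟨0, fun γ => by simp [dig_zero_left], ⟨∅, by simp [dig_zero_left]⟩,
    fun γ h => absurd (dig_zero_left γ) h⟩

theorem dig_self {m : ℕ} {α : Ordinal.{0}} (h : Bdd m α) : dig α α = 0 := by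
  induction h with
  | mk α hd hs he ih =>
    by_contra h
    exact h (ih α h)

theorem exp_lt {m : ℕ} {α γ : Ordinal.{0}} (h : Bdd m α) (hγ : dig α γ ≠ 0) : γ < α := by
  refine lt_of_le_of_ne ((right_le_opow γ one_lt_omega0).trans (opow_le_of_dig_ne hγ)) ?_
  rintro rfl
  exact hγ h.dig_self

theorem of_add_pow {m : ℕ} {ξ γ : Ordinal.{0}} (hξ : ω ^ γ ∣ ξ) (h : Bdd m (ξ + ω ^ γ)) :
    Bdd m ξ := by
  have key : ∀ c, dig ξ c ≤ dig (ξ + ω ^ γ) c := by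
    intro c
    by_cases hc : c = γ
    · subst hc
      rw [dig_add_pow_self hξ]
      exact le_self_add
    · rw [dig_add_pow_of_ne hξ hc]
  have key2 : ∀ c, dig ξ c ≠ 0 → dig (ξ + ω ^ γ) c ≠ 0 := by
    intro c hc h0
    have := key c
    rw [h0] at this
    exact hc (nonpos_iff_eq_zero.1 this)
  obtain ⟨S, h1, h2⟩ := h.supp
  exact ⟨ξ, fun c => (key c).trans (h.dig_le c), ⟨S, h1, fun c hc => h2 c (key2 c hc)⟩,
    fun c hc => h.exp (key2 c hc)⟩

theorem dig_add_pow_ne {ξ γ : Ordinal.{0}} (hξ : ω ^ γ ∣ ξ) : dig (ξ + ω ^ γ) γ ≠ 0 := by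
  rw [dig_add_pow_self hξ]
  simp

/-- Appending one new term to a Cantor normal form raises the bound by at most one. -/
theorem add_pow_mul {m k : ℕ} {ξ δ : Ordinal.{0}} (hξ : Bdd m ξ) (hδ : Bdd (m + 1) δ)
    (hd : ω ^ (δ + 1) ∣ ξ) (hk : k ≤ m + 1) : Bdd (m + 1) (ξ + ω ^ δ * k) := by
  have lt : ω ^ δ * (k : Ordinal.{0}) < ω ^ (δ + 1) := 
    opow_mul_lt_opow (natCast_lt_omega0 k) (lt_add_one δ)
  have big : ∀ c, δ < c → dig (ξ + ω ^ δ * k) c = dig ξ c := fun c hc =>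
    dig_add_of_le hd lt (Order.add_one_le_of_lt hc)
  have eq : dig (ξ + ω ^ δ * k) δ = k := by
    rw [dig_add_of_lt _ hd (lt_add_one δ), dig_pow_mul_nat]
  have small : ∀ c, c < δ → dig (ξ + ω ^ δ * k) c = 0 := fun c hc => by
    rw [dig_add_of_lt _ hd (hc.trans (lt_add_one δ)), dig_pow_mul_nat_of_ne _ hc.ne]
  have hm : (m : Ordinal.{0}) ≤ (m + 1 : ℕ) := by exact_mod_cast Nat.le_succ m
  obtain ⟨S, h1, h2⟩ := hξ.supp
  refine ⟨_, fun c => ?_, ⟨insert δ S, (Finset.card_insert_le _ _).trans (by omega), ?_⟩, ?_⟩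
  · rcases lt_trichotomy c δ with h | rfl | h
    · simp [small c h]
    · rw [eq]
      exact_mod_cast hk
    · rw [big c h]
      exact (hξ.dig_le c).trans hm
  · intro c hc
    rcases lt_trichotomy c δ with h | rfl | h
    · exact absurd (small c h) hc
    · exact Finset.mem_insert_self _ _
    · exact Finset.mem_insert_of_mem (h2 c (big c h ▸ hc))
  · intro c hc
    rcases lt_trichotomy c δ with h | rfl | h
    · exact absurd (small c h) hc
    · exact hδ
    · exact (hξ.exp (big c h ▸ hc)).mono (Nat.le_succ m)

end Bdd

/-! ### Fundamental sequences and the fast-growing hierarchy -/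

/-- Splits off the last term of the Cantor normal form. The divisibility says that all exponents
occurring in `ξ` are at least `γ`. -/
theorem exists_eq_add_pow (α : Ordinal.{0}) (h0 : α ≠ 0) :
    ∃ γ ξ : Ordinal.{0}, ω ^ γ ∣ ξ ∧ α = ξ + ω ^ γ := by
  induction α using WellFoundedLT.induction with
  | ind α ih =>
    set b := log ω α with hb
    have hr : α % ω ^ b < ω ^ b := mod_lt _ (omega0_opow_ne b)
    have hle : ω ^ b ≤ α := opow_log_le_self ω h0
    have hα : ω ^ b * (α / ω ^ b) + α % ω ^ b = α := div_add_mod α _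
    by_cases hr0 : α % ω ^ b = 0
    · obtain ⟨q, hq⟩ := lt_omega0.1 (div_opow_log_lt α one_lt_omega0)
      rw [hr0, add_zero, hq] at hα
      cases q with
      | zero => exact absurd (by simpa using hα.symm) h0
      | succ q =>
        refine ⟨b, ω ^ b * q, Dvd.intro _ rfl, ?_⟩
        rw [← mul_add_one, ← hα, Nat.cast_succ]
    · obtain ⟨γ, ξ, hd, he⟩ := ih _ (hr.trans_le hle) hr0
      have hγ : γ ≤ b := by
        refine ((opow_lt_opow_iff_right one_lt_omega0).1 (lt_of_le_of_lt ?_ hr)).le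
        rw [he]
        exact le_add_self
      refine ⟨γ, ω ^ b * (α / ω ^ b) + ξ,
        dvd_add ((opow_dvd_opow ω hγ).trans (Dvd.intro _ rfl)) hd, ?_⟩
      rw [add_assoc, ← he, hα]

theorem not_succ_of_dvd {α γ : Ordinal.{0}} (hγ : γ ≠ 0) (h : ω ^ γ ∣ α) :
    ¬ ∃ β, α = β + 1 := by
  rintro ⟨β, rfl⟩
  have h1 := dig_of_dvd h (pos_iff_ne_zero.2 hγ)
  have h2 := Bdd.dig_add_pow_ne (ξ := β) (γ := 0) (by simp)
  rw [opow_zero] at h2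
  exact h2 h1

theorem ord_add_one_inj {a b : Ordinal.{0}} (h : a + 1 = b + 1) : a = b := by
  rw [← pred_add_one a, h, pred_add_one]

theorem fundSeq_succ (β : Ordinal.{0}) (x : ℕ) : fundSeq (β + 1) x = β := by
  have hs : ∃ β', β + 1 = β' + 1 := ⟨β, rfl⟩
  rw [fundSeq, dif_neg (by simp), dif_pos hs]
  exact (ord_add_one_inj (Classical.choose_spec hs)).symm

theorem sSup_opow_dvd {ξ γ : Ordinal.{0}} (hξ : ω ^ γ ∣ ξ) :
    sSup {c : Ordinal.{0} | omega0 ^ c ∣ ξ + ω ^ γ} = γ := by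
  have : {c : Ordinal.{0} | omega0 ^ c ∣ ξ + ω ^ γ} = Set.Iic γ := by
    ext c
    simp only [Set.mem_ofPred_eq, Set.mem_Iic]
    constructor
    · intro h
      by_contra hc
      exact Bdd.dig_add_pow_ne hξ (dig_of_dvd h (not_le.1 hc))
    · intro h
      exact (opow_dvd_opow ω h).trans (dvd_add hξ dvd_rfl)
  rw [this, csSup_Iic]

theorem mul_pred_div {ξ γ : Ordinal.{0}} (hξ : ω ^ γ ∣ ξ) :
    ω ^ γ * Ordinal.pred ((ξ + ω ^ γ) / ω ^ γ) = ξ := by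
  obtain ⟨η, rfl⟩ := hξ
  rw [← mul_add_one, mul_div_cancel _ (omega0_opow_ne γ), pred_add_one]

theorem add_pow_ne_zero (ξ γ : Ordinal.{0}) : ξ + ω ^ γ ≠ 0 := by
  simp [omega0_ne_zero]

theorem fundSeq_add_pow_succ {ξ δ : Ordinal.{0}} (x : ℕ) (hξ : ω ^ (δ + 1) ∣ ξ) :
    fundSeq (ξ + ω ^ (δ + 1)) x = ξ + ω ^ δ * (x + 1 : ℕ) := by
  have hs : ∃ δ', δ + 1 = δ' + 1 := ⟨δ, rfl⟩
  have hc : Classical.choose hs = δ := (ord_add_one_inj (Classical.choose_spec hs)).symm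
  rw [fundSeq, dif_neg (add_pow_ne_zero _ _),
    dif_neg (not_succ_of_dvd (by simp) (dvd_add hξ dvd_rfl))]
  simp only [sSup_opow_dvd hξ, mul_pred_div hξ, dif_pos hs, hc]
  push_cast
  rfl

theorem fundSeq_add_pow_limit {ξ γ : Ordinal.{0}} (x : ℕ) (hξ : ω ^ γ ∣ ξ) (h0 : γ ≠ 0)
    (hs : ¬ ∃ δ, γ = δ + 1) (hlt : γ < ξ + ω ^ γ) :
    fundSeq (ξ + ω ^ γ) x = ξ + ω ^ fundSeq γ x := by
  rw [fundSeq, dif_neg (add_pow_ne_zero _ _),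
    dif_neg (not_succ_of_dvd h0 (dvd_add hξ dvd_rfl))]
  simp only [sSup_opow_dvd hξ, mul_pred_div hξ, dif_neg hs, dif_pos hlt]

theorem opow_succ_dvd_of_lt {ξ γ δ : Ordinal.{0}} (hξ : ω ^ γ ∣ ξ) (h : δ < γ) :
    ω ^ (δ + 1) ∣ ξ :=
  (opow_dvd_opow ω (Order.add_one_le_of_lt h)).trans hξ

theorem Bdd.add_pow {m : ℕ} {ξ δ : Ordinal.{0}} (hξ : Bdd m ξ) (hδ : Bdd (m + 1) δ)
    (hd : ω ^ (δ + 1) ∣ ξ) : Bdd (m + 1) (ξ + ω ^ δ) := by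
  simpa using hξ.add_pow_mul (k := 1) hδ hd (by omega)

theorem Bdd.pred {m : ℕ} {δ : Ordinal.{0}} (h : Bdd m (δ + 1)) : Bdd m δ :=
  Bdd.of_add_pow (γ := 0) (by simp) (by simpa using h)

/-- Passing to a member of the fundamental sequence raises the hereditary size by at most one,
because at most one new exponent appears at every level of the normal form. -/
theorem fundSeq_lt_and_bdd {m x : ℕ} (hx : x ≤ m) {α : Ordinal.{0}} (h : Bdd m α) :
    α ≠ 0 → fundSeq α x < α ∧ Bdd (m + 1) (fundSeq α x) := by
  induction h with
  | mk α hd hs he ih =>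
    intro h0
    have hα : Bdd m α := ⟨α, hd, hs, he⟩
    clear hd hs
    obtain ⟨γ, ξ, hξ, rfl⟩ := exists_eq_add_pow α h0
    have hne := Bdd.dig_add_pow_ne hξ
    have hbξ : Bdd m ξ := hα.of_add_pow hξ
    by_cases hγ0 : γ = 0
    · subst hγ0
      rw [opow_zero, fundSeq_succ]
      exact ⟨lt_add_one ξ, hbξ.mono (Nat.le_succ m)⟩
    by_cases hγs : ∃ δ, γ = δ + 1
    · obtain ⟨δ, rfl⟩ := hγs
      rw [fundSeq_add_pow_succ x hξ]
      exact ⟨add_lt_add_right (opow_mul_lt_opow (natCast_lt_omega0 _) (lt_add_one δ)) ξ,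
        hbξ.add_pow_mul ((he _ hne).pred.mono (Nat.le_succ m)) hξ (by omega)⟩
    · obtain ⟨h1, h2⟩ := ih γ hne hγ0
      rw [fundSeq_add_pow_limit x hξ hγ0 hγs (hα.exp_lt hne)]
      exact ⟨add_lt_add_right ((opow_lt_opow_iff_right one_lt_omega0).2 h1) ξ,
        hbξ.add_pow h2 (opow_succ_dvd_of_lt hξ h1)⟩

theorem fgh_zero (x : ℕ) : fgh 0 x = x + 1 := by
  rw [fgh, dif_pos rfl]

theorem fgh_succ (β : Ordinal.{0}) (x : ℕ) : fgh (β + 1) x = (fgh β)^[x + 1] x := by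
  have hs : ∃ β', β + 1 = β' + 1 := ⟨β, rfl⟩
  have hc : Classical.choose hs = β := (ord_add_one_inj (Classical.choose_spec hs)).symm
  rw [fgh, dif_neg (by simp), dif_pos hs, hc]

theorem fgh_limit {α : Ordinal.{0}} {x : ℕ} (h0 : α ≠ 0) (hs : ¬ ∃ β, α = β + 1)
    (hlt : fundSeq α x < α) : fgh α x = fgh (fundSeq α x) x := by
  rw [fgh, dif_neg h0, dif_neg hs]
  simp only [dif_pos hlt]

/-! ### Long descending sequences of ordinals of small norm -/

/-- One step of a timed descent: time advances by one, the ordinal strictly decreases, and its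
hereditary size stays bounded by the time. -/
def Step (p q : ℕ × Ordinal.{0}) : Prop :=
  q.1 = p.1 + 1 ∧ q.2 < p.2 ∧ Bdd q.1 q.2

/-- A timed descent. -/
abbrev Run : ℕ × Ordinal.{0} → ℕ × Ordinal.{0} → Prop := Relation.ReflTransGen Step

theorem Run.bdd {p q : ℕ × Ordinal.{0}} (h : Run p q) (hp : Bdd p.1 p.2) : Bdd q.1 q.2 := by
  induction h with
  | refl => exact hp
  | tail _ h _ => exact h.2.2

/-- Descending by `ω ^ α` takes time from any `i ≥ x` to at least `F_α(x)`. The fundamental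
sequences are always evaluated at `x`, the value reached by the computation of `F`, while the
clock `i` also ticks at limit steps; so no monotonicity of `F_α` is needed. -/
theorem exists_run (α : Ordinal.{0}) : ∀ (ξ : Ordinal.{0}) (x i : ℕ), x ≤ i → ω ^ α ∣ ξ →
    Bdd i (ξ + ω ^ α) → ∃ j, fgh α x ≤ j ∧ Run (i, ξ + ω ^ α) (j, ξ) := by
  induction α using WellFoundedLT.induction with
  | ind α ih =>
    intro ξ x i hx hξ hb
    have hne := Bdd.dig_add_pow_ne hξ
    have hbα : Bdd i α := hb.exp hne
    have hbξ : Bdd i ξ := hb.of_add_pow hξ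
    by_cases h0 : α = 0
    · subst h0
      refine ⟨i + 1, by rw [fgh_zero]; omega, .single ⟨rfl, ?_, hbξ.mono (Nat.le_succ i)⟩⟩
      simp
    by_cases hs : ∃ β, α = β + 1
    · obtain ⟨β, rfl⟩ := hs
      have hβ : β < β + 1 := lt_add_one β
      have iter : ∀ (k x i : ℕ), x ≤ i → Bdd i (ξ + ω ^ β * k) →
          ∃ j, (fgh β)^[k] x ≤ j ∧ Run (i, ξ + ω ^ β * k) (j, ξ) := by
        intro k
        induction k with
        | zero => exact fun x i hx _ => ⟨i, hx, by simpa using Relation.ReflTransGen.refl⟩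
        | succ k ihk =>
          intro x i hx hb
          have e : ξ + ω ^ β * (k + 1 : ℕ) = ξ + ω ^ β * k + ω ^ β := by
            rw [Nat.cast_succ, mul_add_one, add_assoc]
          rw [e] at hb ⊢
          obtain ⟨j, hj, hr⟩ := ih β hβ (ξ + ω ^ β * k) x i hx
            (dvd_add ((opow_dvd_opow ω hβ.le).trans hξ) (Dvd.intro _ rfl)) hb
          obtain ⟨j', hj', hr'⟩ := ihk (fgh β x) j hj (hr.bdd hb)
          exact ⟨j', hj', hr.trans hr'⟩
      have hb' : Bdd (i + 1) (ξ + ω ^ β * (x + 1 : ℕ)) :=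
        hbξ.add_pow_mul (hbα.pred.mono (Nat.le_succ i)) hξ (by omega)
      obtain ⟨j, hj, hr⟩ := iter (x + 1) x (i + 1) (by omega) hb'
      refine ⟨j, by rwa [fgh_succ], .head ⟨rfl, ?_, hb'⟩ hr⟩
      exact add_lt_add_right (opow_mul_lt_opow (natCast_lt_omega0 _) hβ) ξ
    · obtain ⟨h1, h2⟩ := fundSeq_lt_and_bdd hx hbα h0
      have hd := opow_succ_dvd_of_lt hξ h1
      have hb' := hbξ.add_pow h2 hd
      obtain ⟨j, hj, hr⟩ := ih _ h1 ξ x (i + 1) (by omega)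
        ((opow_dvd_opow ω h1.le).trans hξ) hb'
      refine ⟨j, by rwa [fgh_limit h0 hs h1], .head ⟨rfl, ?_, hb'⟩ hr⟩
      exact add_lt_add_right ((opow_lt_opow_iff_right one_lt_omega0).2 h1) ξ

/-- A timed descent as a function of time; its values outside the time interval are irrelevant. -/
theorem Run.exists_seq {p q : ℕ × Ordinal.{0}} (h : Run p q) (hp : Bdd p.1 p.2) :
    p.1 ≤ q.1 ∧ ∃ s : ℕ → Ordinal.{0}, s q.1 = q.2 ∧
      (∀ t, p.1 ≤ t → t ≤ q.1 → Bdd t (s t) ∧ s t ≤ p.2) ∧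
      ∀ t u, p.1 ≤ t → t < u → u ≤ q.1 → s u < s t := by
  induction h with
  | refl =>
    refine ⟨le_rfl, fun _ => p.2, rfl, fun t h1 h2 => ?_, fun t u h1 h2 h3 => by omega⟩
    rw [le_antisymm h2 h1]
    exact ⟨hp, le_rfl⟩
  | @tail q r hpq hqr ih =>
    obtain ⟨hle, s, hsq, hs1, hs2⟩ := ih
    obtain ⟨e, hlt, hb⟩ := hqr
    have low : ∀ t, t ≤ q.1 → (if t = r.1 then r.2 else s t) = s t := fun t ht =>
      if_neg (by omega)
    refine ⟨by omega, fun t => if t = r.1 then r.2 else s t, by simp, fun t h1 h2 => ?_,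
      fun t u h1 h2 h3 => ?_⟩
    · by_cases ht : t = r.1
      · subst ht
        simp only [if_true]
        refine ⟨hb, hlt.le.trans ?_⟩
        rw [← hsq]
        exact (hs1 q.1 hle le_rfl).2
      · simp only [if_neg ht]
        exact hs1 t h1 (by omega)
    · simp only
      rw [low t (by omega)]
      by_cases hu : u = r.1
      · rw [if_pos hu]
        rcases Nat.lt_or_ge t q.1 with h | h
        · exact (hlt.trans_eq hsq.symm).trans (hs2 t q.1 h1 h le_rfl)
        · rw [show t = q.1 by omega, hsq]
          exact hlt
      · rw [if_neg hu]
        exact hs2 t u h1 h2 (by omega)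

theorem omegaTower_strictMono (m : ℕ) {a b : Ordinal.{0}} (h : a < b) :
    omegaTower m a < omegaTower m b := by
  induction m with
  | zero => exact h
  | succ m ih => exact (opow_lt_opow_iff_right one_lt_omega0).2 ih

theorem omegaTower_one_lt (m : ℕ) : omegaTower m 1 < ω ^ omegaTower m 1 := by
  induction m with
  | zero => simp [omegaTower]
  | succ m ih => exact (opow_lt_opow_iff_right one_lt_omega0).2 ih

theorem omegaTower_one_ne_zero (m : ℕ) : omegaTower m 1 ≠ 0 := by
  cases m with
  | zero => simp [omegaTower]
  | succ m => exact omega0_opow_ne _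

theorem fundSeq_omegaTower (m x : ℕ) :
    fundSeq (omegaTower (m + 1) 1) x = omegaTower m (x + 1 : ℕ) := by
  induction m with
  | zero =>
    have := fundSeq_add_pow_succ (ξ := 0) (δ := 0) x (dvd_zero _)
    simpa [omegaTower] using this
  | succ m ih =>
    have := fundSeq_add_pow_limit (ξ := 0) (γ := omegaTower (m + 1) 1) x (dvd_zero _)
      (omegaTower_one_ne_zero _) (not_succ_of_dvd (omegaTower_one_ne_zero m) dvd_rfl)
      (by rw [zero_add]; exact omegaTower_one_lt _)
    rw [ih, zero_add, zero_add] at this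
    exact this

theorem Feps0_eq (n : ℕ) : Feps0 n = fgh (omegaTower n (n + 1 : ℕ)) n := by
  have h := fundSeq_omegaTower n n
  rw [Feps0, fgh_limit (omegaTower_one_ne_zero _)
    (not_succ_of_dvd (omegaTower_one_ne_zero n) dvd_rfl), h]
  rw [h]
  cases n with
  | zero => simp [omegaTower]
  | succ n =>
    refine (opow_lt_opow_iff_right one_lt_omega0).2 ?_
    have : ∀ m : ℕ, omegaTower m (n + 1 + 1 : ℕ) < omegaTower (m + 1) 1 := by
      intro m
      induction m with
      | zero => simpa [omegaTower] using natCast_lt_omega0 (n + 1 + 1)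
      | succ m ih => exact (opow_lt_opow_iff_right one_lt_omega0).2 ih
    exact this n

theorem bdd_omegaTower (m k : ℕ) : Bdd (k + 1) (omegaTower m (k + 1 : ℕ)) := by
  induction m with
  | zero =>
    simpa [omegaTower] using
      (Bdd.zero k).add_pow_mul (k := k + 1) (Bdd.zero (k + 1)) (dvd_zero _) le_rfl
  | succ m ih => simpa [omegaTower] using (Bdd.zero k).add_pow ih (dvd_zero _)

/-- There is a strictly descending sequence of ordinals at most `ω_{n+1}^{n+1}`, indexed by the
times from `n + 1` to at least `F_{ε₀}(n)`, whose hereditary sizes are bounded by the time. -/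
theorem exists_descent (n : ℕ) : ∃ (J : ℕ) (s : ℕ → Ordinal.{0}), Feps0 n ≤ J ∧
    (∀ t, n + 1 ≤ t → t ≤ J → Bdd t (s t) ∧ s t ≤ omegaTower (n + 1) (n + 1 : ℕ)) ∧
    ∀ t u, n + 1 ≤ t → t < u → u ≤ J → s u < s t := by
  have hb := bdd_omegaTower (n + 1) n
  have e : omegaTower (n + 1) (n + 1 : ℕ) = 0 + ω ^ omegaTower n (n + 1 : ℕ) := by
    rw [zero_add, omegaTower]
  rw [e] at hb ⊢
  obtain ⟨J, hJ, hr⟩ := exists_run (omegaTower n (n + 1 : ℕ)) 0 n (n + 1) (by omega)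
    (dvd_zero _) hb
  obtain ⟨-, s, -, h1, h2⟩ := hr.exists_seq hb
  exact ⟨J, s, by rwa [Feps0_eq], h1, h2⟩

/-! ### The Ketonen–Solovay colouring -/

/-- For `b < a`, the exponent `log ω (a - b)` is the largest one at which the Cantor normal forms
of `a` and `b` differ. -/
theorem dig_log_sub {a b : Ordinal.{0}} (h : b < a) :
    dig b (log ω (a - b)) < dig a (log ω (a - b)) ∧
      ∀ c, log ω (a - b) < c → dig a c = dig b c := by
  set ρ := a - b with hρ
  set δ := log ω ρ with hδ
  have hρ0 : ρ ≠ 0 := Ordinal.sub_ne_zero_iff_lt.2 h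
  have ha : a = b + ρ := (Ordinal.add_sub_cancel_of_le h.le).symm
  have key : ∀ c, δ < c → ∃ q r, b = ω ^ c * q + r ∧ a = ω ^ c * q + (r + ρ) ∧ r < ω ^ c ∧
      r + ρ < ω ^ c := by
    intro c hc
    have hr : b % ω ^ c < ω ^ c := mod_lt _ (omega0_opow_ne c)
    refine ⟨b / ω ^ c, b % ω ^ c, (div_add_mod _ _).symm, ?_, hr,
      isPrincipal_add_omega0_opow c hr (lt_opow_of_log_lt one_lt_omega0 hc)⟩
    rw [← add_assoc, div_add_mod, ha]
  constructor
  · obtain ⟨q, r, hb, ha', hr, hr'⟩ := key (δ + 1) (lt_add_one δ)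
    have n1 := omega0_opow_ne δ
    have small : ∀ x, x < ω ^ (δ + 1) → dig (ω ^ (δ + 1) * q + x) δ = x / ω ^ δ := by
      intro x hx
      rw [dig_add_of_lt _ (Dvd.intro _ rfl) (lt_add_one δ), dig, mod_eq_of_lt]
      rwa [← lt_mul_iff_div_lt n1, ← opow_add_one]
    rw [hb, ha', small _ hr, small _ hr', ← Order.add_one_le_iff, ← mul_le_iff_le_div n1,
      mul_add_one]
    calc ω ^ δ * (r / ω ^ δ) + ω ^ δ ≤ r + ω ^ δ := by gcongr; exact mul_div_le _ _
      _ ≤ r + ρ := by gcongr; exact opow_log_le_self ω hρ0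
  · intro c hc
    obtain ⟨q, r, hb, ha', hr, hr'⟩ := key c hc
    rw [ha', hb, dig_add_of_le (Dvd.intro _ rfl) hr le_rfl,
      dig_add_of_le (Dvd.intro _ rfl) hr' le_rfl]

/-- The sequence of the largest exponents at which consecutive members of `W` differ. -/
def del (W : ℕ → Ordinal.{0}) (t : ℕ) : Ordinal.{0} := log ω (W t - W (t + 1))

/-- If the largest exponent of difference is constant, its coefficient decreases, so the sequence
is no longer than that coefficient allows. -/
theorem le_of_del_const {W : ℕ → Ordinal.{0}} {M h : ℕ} {δ : Ordinal.{0}}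
    (hW : ∀ t, t + 1 < M → W (t + 1) < W t) (hb : Bdd h (W 0))
    (hδ : ∀ t, t + 1 < M → del W t = δ) : M ≤ h + 1 := by
  have hd : ∀ t, ∃ d : ℕ, dig (W t) δ = d := fun t => lt_omega0.1 (mod_lt _ omega0_ne_zero)
  choose d hd using hd
  have hdec : ∀ t, t + 1 < M → d (t + 1) < d t := by
    intro t ht
    have := (dig_log_sub (hW t ht)).1
    change dig _ (del W t) < dig _ (del W t) at this
    rw [hδ t ht, hd, hd] at this
    exact_mod_cast this
  have h0 : d 0 ≤ h := by
    have := hb.dig_le δ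
    rw [hd] at this
    exact_mod_cast this
  have hsum : ∀ t, t < M → d t + t ≤ d 0 := by
    intro t
    induction t with
    | zero => intro _; omega
    | succ t ih =>
      intro ht
      have := ih (by omega)
      have := hdec t ht
      omega
  by_contra hM
  have := hsum (M - 1) (by omega)
  omega

/-- If the largest exponents of difference strictly increase, then all of them already occur in the
Cantor normal form of the first ordinal. -/
theorem le_of_del_strictMono {W : ℕ → Ordinal.{0}} {M h : ℕ}
    (hW : ∀ t, t + 1 < M → W (t + 1) < W t) (hb : Bdd h (W 0))
    (hδ : ∀ t, t + 2 < M → del W t < del W (t + 1)) : M ≤ h + 1 := by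
  have hmono : ∀ u t, t < u → u + 1 < M → del W t < del W u := by
    intro u
    induction u with
    | zero => intro t ht; omega
    | succ u ih =>
      intro t ht hu
      rcases Nat.lt_succ_iff_lt_or_eq.1 ht with h | rfl
      · exact (ih t h (by omega)).trans (hδ u (by omega))
      · exact hδ t (by omega)
  have hne : ∀ t, t + 1 < M → dig (W 0) (del W t) ≠ 0 := by
    intro t ht
    have : ∀ s, s ≤ t → dig (W 0) (del W t) = dig (W s) (del W t) := by
      intro s
      induction s with
      | zero => exact fun _ => rfl
      | succ s ih =>
        intro hs
        rw [ih (by omega)]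
        exact (dig_log_sub (hW s (by omega))).2 _ (hmono t s (by omega) ht)
    rw [this t le_rfl]
    exact (lt_of_le_of_lt zero_le (dig_log_sub (hW t ht)).1).ne'
  obtain ⟨S, hS, hS'⟩ := hb.supp
  have hcard : (Finset.range (M - 1)).card ≤ S.card := by
    refine Finset.card_le_card_of_injOn (del W) (fun t ht => ?_) (fun t ht u hu htu => ?_)
    · have := Finset.mem_range.1 (Finset.mem_coe.1 ht)
      exact hS' _ (hne t (by omega))
    · have h1 := Finset.mem_range.1 (Finset.mem_coe.1 ht)
      have h2 := Finset.mem_range.1 (Finset.mem_coe.1 hu)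
      rcases lt_trichotomy t u with h | h | h
      · exact absurd htu (hmono u t h (by omega)).ne
      · exact h
      · exact absurd htu (hmono t u h (by omega)).ne'
  rw [Finset.card_range] at hcard
  omega

/-- The colour of a descending sequence `W 0 > W 1 > ⋯ > W (r + 1)` of ordinals below
`omegaTower (r + 1) k`. It records how the first two exponents of difference compare and, as long
as these decrease, the colour of the sequence of exponents of difference, whose members lie below
`omegaTower r k`. -/
def col : ℕ → (ℕ → Ordinal.{0}) → ℕ
  | 0, W => Cardinal.toNat (del W 0).card
  | r + 1, W => if del W 1 < del W 0 then col r (del W) + 2 else if del W 1 = del W 0 then 0 else 1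

theorem omegaTower_ne_zero (m : ℕ) {k : ℕ} (hk : k ≠ 0) : omegaTower m k ≠ 0 := by
  cases m with
  | zero => simpa [omegaTower] using hk
  | succ m => exact omega0_opow_ne _

theorem del_lt {W : ℕ → Ordinal.{0}} {t r k : ℕ} (hk : k ≠ 0)
    (h : W t < omegaTower (r + 1) k) : del W t < omegaTower r k :=
  lt_log_of_lt_opow (omegaTower_ne_zero r hk) ((sub_le_self _ _).trans_lt h)

theorem col_lt {k : ℕ} (hk : k ≠ 0) (r : ℕ) : ∀ W : ℕ → Ordinal.{0},
    W 0 < omegaTower (r + 1) k → col r W < k + 2 * r := by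
  induction r with
  | zero =>
    intro W h
    have h1 : del W 0 < (k : Ordinal.{0}) := del_lt (r := 0) hk h
    obtain ⟨d, hd⟩ := lt_omega0.1 (h1.trans (natCast_lt_omega0 k))
    rw [hd] at h1
    have h2 : d < k := by exact_mod_cast h1
    simpa [col, hd] using h2
  | succ r ih =>
    intro W h
    have := ih (del W) (del_lt hk h)
    rw [col]
    split_ifs <;> omega

theorem col_congr (r : ℕ) : ∀ W W' : ℕ → Ordinal.{0}, (∀ t, t ≤ r + 1 → W t = W' t) →
    col r W = col r W' := by
  induction r with
  | zero =>
    intro W W' h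
    simp only [col, del, h 0 (by omega), h (0 + 1) (by omega)]
  | succ r ih =>
    intro W W' h
    have hd : ∀ t, t ≤ r + 1 → del W t = del W' t := fun t ht => by
      rw [del, del, h t (by omega), h (t + 1) (by omega)]
    rw [col, col, ih _ _ hd, hd 0 (by omega), hd 1 (by omega)]

/-- A descending sequence all of whose windows of `r + 2` consecutive members have the same colour
is short, compared with the hereditary size of its first member. -/
theorem le_of_col_const {k : ℕ} (hk : k ≠ 0) (r : ℕ) : ∀ (W : ℕ → Ordinal.{0}) (M h : ℕ),
    (∀ t, t + 1 < M → W (t + 1) < W t) → Bdd h (W 0) → W 0 < omegaTower (r + 1) k →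
    (∀ t, t + r + 1 < M → col r (fun u => W (t + u)) = col r W) → M ≤ h + (r + 2) ^ 2 := by
  induction r with
  | zero =>
    intro W M h hW hb hlt hc
    have hle : ∀ t, t < M → W t ≤ W 0 := by
      intro t
      induction t with
      | zero => exact fun _ => le_rfl
      | succ t ih => exact fun ht => (hW t ht).le.trans (ih (by omega))
    have hnat : ∀ t, t < M → ∃ d : ℕ, del W t = d := fun t ht =>
      lt_omega0.1 ((del_lt (r := 0) hk ((hle t ht).trans_lt hlt)).trans (natCast_lt_omega0 k))
    have hconst : ∀ t, t + 1 < M → del W t = del W 0 := by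
      intro t ht
      obtain ⟨d, hd⟩ := hnat t (by omega)
      obtain ⟨e, he⟩ := hnat 0 (by omega)
      have h1 : Cardinal.toNat (del W t).card = Cardinal.toNat (del W 0).card := hc t ht
      rw [hd, he] at h1 ⊢
      simpa using h1
    have := le_of_del_const hW hb hconst
    omega
  | succ r ih =>
    intro W M h hW hb hlt hc
    have harith : (r + 1 + 2) ^ 2 = (r + 2) ^ 2 + 2 * r + 5 := by ring
    by_cases hM : M ≤ r + 2
    · omega
    have hcol : ∀ t, t + r + 2 < M →
        (if del W (t + 1) < del W t then col r (fun u => del W (t + u)) + 2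
          else if del W (t + 1) = del W t then 0 else 1) =
        if del W 1 < del W 0 then col r (del W) + 2 else if del W 1 = del W 0 then 0 else 1 :=
      fun t ht => hc t (by omega)
    -- The last `r + 1` members start no full window and are dropped.
    have hW' : ∀ t, t + 1 < M - (r + 1) → W (t + 1) < W t := fun t ht => hW t (by omega)
    by_cases h1 : del W 1 < del W 0
    · simp only [if_pos h1] at hcol
      have hdec : ∀ t, t + r + 2 < M → del W (t + 1) < del W t := by
        intro t ht
        by_contra h2
        have := hcol t ht
        rw [if_neg h2] at this
        split_ifs at this
        all_goals omega
      have hne : dig (W 0) (del W 0) ≠ 0 :=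
        (lt_of_le_of_lt zero_le (dig_log_sub (hW 0 (by omega))).1).ne'
      have := ih (del W) (M - (r + 1)) h (fun t ht => hdec t (by omega)) (hb.exp hne)
        (del_lt hk hlt) (fun t ht => by
          have h3 := hcol t (by omega)
          rw [if_pos (hdec t (by omega))] at h3
          omega)
      omega
    by_cases h2 : del W 1 = del W 0
    · simp only [if_neg h1, if_pos h2] at hcol
      have heq : ∀ t, t + r + 2 < M → del W (t + 1) = del W t := by
        intro t ht
        by_contra h3
        have := hcol t ht
        rw [if_neg h3] at this
        split_ifs at this
      have hconst : ∀ t, t + 1 < M - (r + 1) → del W t = del W 0 := by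
        intro t
        induction t with
        | zero => exact fun _ => rfl
        | succ t iht => exact fun ht => (heq t (by omega)).trans (iht (by omega))
      have := le_of_del_const hW' hb hconst
      omega
    · simp only [if_neg h1, if_neg h2] at hcol
      have hinc : ∀ t, t + 2 < M - (r + 1) → del W t < del W (t + 1) := by
        intro t ht
        have h3 := hcol t (by omega)
        by_contra h4
        rcases (not_lt.1 h4).lt_or_eq with h5 | h5
        · rw [if_pos h5] at h3
          omega
        · rw [if_neg (by rw [h5]; exact lt_irrefl _), if_pos h5] at h3
          omega
      have := le_of_del_strictMono hW' hb hinc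
      omega

/-- The increasing enumeration of a finite set, with value `0` beyond its cardinality. -/
def en (s : Finset ℕ) (t : ℕ) : ℕ :=
  if h : t < s.card then s.orderEmbOfFin rfl ⟨t, h⟩ else 0

theorem en_mem {s : Finset ℕ} {t : ℕ} (h : t < s.card) : en s t ∈ s := by
  rw [en, dif_pos h]
  exact Finset.orderEmbOfFin_mem _ _ _

theorem en_lt {s : Finset ℕ} {t u : ℕ} (h : t < u) (hu : u < s.card) : en s t < en s u := by
  rw [en, en, dif_pos (h.trans hu), dif_pos hu]
  exact (s.orderEmbOfFin rfl).strictMono h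

theorem en_zero_eq_min' {s : Finset ℕ} (h : s.Nonempty) : en s 0 = s.min' h := by
  rw [en, dif_pos h.card_pos]
  exact Finset.orderEmbOfFin_zero rfl h.card_pos

/-- The set of the `d` consecutive members of `Y` starting with the `i`-th one. -/
def window (Y : Finset ℕ) (d i : ℕ) : Finset ℕ :=
  (Finset.range d).image fun t => en Y (i + t)

theorem window_subset {Y : Finset ℕ} {d i : ℕ} (h : i + d ≤ Y.card) : window Y d i ⊆ Y := by
  intro x hx
  obtain ⟨t, ht, rfl⟩ := Finset.mem_image.1 hx
  have := Finset.mem_range.1 ht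
  exact en_mem (by omega)

theorem card_window {Y : Finset ℕ} {d i : ℕ} (h : i + d ≤ Y.card) : (window Y d i).card = d := by
  rw [window, Finset.card_image_of_injOn, Finset.card_range]
  intro t ht u hu htu
  have h1 := Finset.mem_range.1 (Finset.mem_coe.1 ht)
  have h2 := Finset.mem_range.1 (Finset.mem_coe.1 hu)
  rcases lt_trichotomy t u with h3 | h3 | h3
  · exact absurd htu (en_lt (by omega) (by omega)).ne
  · exact h3
  · exact absurd htu (en_lt (by omega) (by omega)).ne'

theorem en_window {Y : Finset ℕ} {d i t : ℕ} (h : i + d ≤ Y.card) (ht : t < d) :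
    en (window Y d i) t = en Y (i + t) := by
  have hc := card_window h
  have ht' : t < (window Y d i).card := by omega
  rw [en, dif_pos ht']
  have := Finset.orderEmbOfFin_unique (s := window Y d i) rfl
    (f := fun u : Fin (window Y d i).card => en Y (i + u))
    (fun u => Finset.mem_image.2 ⟨u, Finset.mem_range.2 (by omega), rfl⟩)
    (fun u v huv => en_lt (by have : (u : ℕ) < v := huv; omega) (by omega))
  exact (congrFun this ⟨t, ht'⟩).symm

/-! ### Finiteness of the Paris–Harrington numbers -/

theorem exists_eventually_eq {k : ℕ} (g : ℕ → Fin k) :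
    ∃ c, ∀ᶠ x in (Filter.hyperfilter ℕ : Filter ℕ), g x = c := by
  obtain ⟨c, hc⟩ := Ultrafilter.eq_pure_of_finite ((Filter.hyperfilter ℕ).map g)
  refine ⟨c, ?_⟩
  have : {c} ∈ (Filter.hyperfilter ℕ).map g := by
    rw [hc]
    exact Ultrafilter.mem_pure.2 rfl
  exact this

/-- The Paris–Harrington theorem. Counterexamples for all `N` have a limit along a nonprincipal
ultrafilter `U`. Iterated limits along `U` assign to this limit colouring of `n`-element sets a
generic colour, and a finite set all of whose subsets have this generic limit colour can be enlarged
by `U`-almost every number. -/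
theorem exists_PH (k m n : ℕ) : ∃ N, PH k m n N := by
  by_contra hno
  have hno' : ∀ N, ∃ f : Finset ℕ → Fin k, ¬ ∃ Y : Finset ℕ, Y ⊆ Finset.range N ∧ m ≤ Y.card ∧
      IsLargeSet Y ∧
      ∀ s t : Finset ℕ, s ⊆ Y → t ⊆ Y → s.card = n → t.card = n → f s = f t := by
    intro N
    by_contra h
    exact hno ⟨N, fun f => by
      by_contra h'
      exact h ⟨f, h'⟩⟩
  choose f hf using hno'
  choose lim hlim using @exists_eventually_eq k
  let G : ℕ → Finset ℕ → Fin k := fun j => Nat.rec (fun s => lim fun N => f N s)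
    (fun _ g s => lim fun x => g (insert x s)) j
  have hG : ∀ j s, ∀ᶠ x in (Filter.hyperfilter ℕ : Filter ℕ), G j (insert x s) = G (j + 1) s :=
    fun j s => hlim fun x => G j (insert x s)
  let Good : Finset ℕ → Prop := fun Y => ∀ s, s ⊆ Y → ∀ j, s.card + j = n → G j s = G n ∅
  have hgt : ∀ a : ℕ, ∀ᶠ x in (Filter.hyperfilter ℕ : Filter ℕ), a < x := fun a =>
    Nat.hyperfilter_le_atTop (Filter.eventually_gt_atTop a)
  have good0 : Good ∅ := by
    intro s hs j hj
    obtain rfl := Finset.subset_empty.1 hs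
    rw [Finset.card_empty, zero_add] at hj
    rw [hj]
  have extend : ∀ Y, Good Y → ∀ a, ∃ x, a < x ∧ x ∉ Y ∧ Good (insert x Y) := by
    intro Y hY a
    have h1 : ∀ᶠ x in (Filter.hyperfilter ℕ : Filter ℕ), ∀ s ∈ Y.powerset,
        ∀ j, s.card + (j + 1) = n → G j (insert x s) = G n ∅ := by
      rw [Filter.eventually_all_finset]
      intro s hs
      by_cases hj : ∃ j, s.card + (j + 1) = n
      · obtain ⟨j, hj⟩ := hj
        filter_upwards [hG j s] with x hx j' hj'
        obtain rfl : j' = j := by omega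
        rw [hx, hY s (Finset.mem_powerset.1 hs) _ hj]
      · exact Filter.Eventually.of_forall fun x j hj' => absurd ⟨j, hj'⟩ hj
    obtain ⟨x, ⟨hx1, hx2⟩, hx3⟩ := ((h1.and (hgt a)).and (hgt (Y.sup id))).exists
    have hxY : x ∉ Y := fun h => absurd (Finset.le_sup (f := id) h) (not_le.2 hx3)
    refine ⟨x, hx2, hxY, fun s hs j hj => ?_⟩
    by_cases hxs : x ∈ s
    · have he : s.erase x ⊆ Y := Finset.subset_insert_iff.1 hs
      have := hx1 (s.erase x) (Finset.mem_powerset.2 he) j (by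
        have := Finset.card_erase_add_one hxs
        omega)
      rwa [Finset.insert_erase hxs] at this
    · exact hY s ((Finset.subset_insert_iff_of_notMem hxs).1 hs) j hj
  obtain ⟨x₀, -, -, hx₀⟩ := extend ∅ good0 0
  have build : ∀ q, ∃ Y, Good Y ∧ Y.card = q + 1 ∧ x₀ ∈ Y := by
    intro q
    induction q with
    | zero => exact ⟨_, hx₀, by simp, by simp⟩
    | succ q ih =>
      obtain ⟨Y, h1, h2, h3⟩ := ih
      obtain ⟨x, -, hx, hx'⟩ := extend Y h1 0
      exact ⟨_, hx', by rw [Finset.card_insert_of_notMem hx, h2], Finset.mem_insert_of_mem h3⟩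
  obtain ⟨Y, hgood, hcard, hmem⟩ := build (max m x₀)
  have h1 : ∀ᶠ N in (Filter.hyperfilter ℕ : Filter ℕ), ∀ s ∈ Y.powerset, f N s = G 0 s := by
    rw [Filter.eventually_all_finset]
    exact fun s _ => hlim fun N => f N s
  obtain ⟨N, hN1, hN2⟩ := (h1.and (hgt (Y.sup id))).exists
  refine hf N ⟨Y, fun y hy => Finset.mem_range.2 ?_, by omega,
    ⟨⟨x₀, hmem⟩, (Finset.min'_le Y x₀ hmem).trans (by omega)⟩, fun s t hs ht hsn htn => ?_⟩
  · exact lt_of_le_of_lt (Finset.le_sup (f := id) hy) hN2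
  · rw [hN1 s (Finset.mem_powerset.2 hs), hN1 t (Finset.mem_powerset.2 ht),
      hgood s hs 0 (by omega), hgood t ht 0 (by omega)]

/-! ### The lower bound -/

/-- For `N < F_{ε₀}(n)` the colouring that sends a set to its minimum if this is below `c`, and to
the Ketonen–Solovay colour of the corresponding ordinals otherwise, has no large homogeneous set.
Members of `ℕ` are shifted by `p = (n + 2) ^ 2 + 1` before being used as times of the descent; this
makes up for the additive constant in `le_of_col_const`. -/
theorem Feps0_le_of_PH {n K N : ℕ} (hK : (n + 2) ^ 2 + 4 * n + 4 ≤ K)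
    (hN : PH K (n + 2 + 1) (n + 2) N) : Feps0 n ≤ N := by
  by_contra hlt
  obtain ⟨J, s, hJ, hs1, hs2⟩ := exists_descent n
  set p := (n + 2) ^ 2 + 1 with hp
  set c := n + 1 + p with hc
  let colour : (ℕ → ℕ) → ℕ := fun e => if e 0 < c then e 0 else c + col n fun t => s (e t - p)
  obtain ⟨Y, hYN, hYc, ⟨hne, hlarge⟩, hhom⟩ :=
    hN fun S => ⟨colour (en S) % K, Nat.mod_lt _ (by omega)⟩
  rw [← en_zero_eq_min' hne] at hlarge
  have hyJ : ∀ t, t < Y.card → en Y t - p ≤ J := fun t ht => by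
    have := Finset.mem_range.1 (hYN (en_mem ht))
    omega
  have htower : omegaTower (n + 1) (n + 1 : ℕ) < omegaTower (n + 1) (n + 2 : ℕ) :=
    omegaTower_strictMono _ (by exact_mod_cast Nat.lt_succ_self (n + 1))
  have hbound : ∀ i, i < Y.card → colour (fun t => en Y (i + t)) < K := by
    intro i hi
    by_cases h : en Y (i + 0) < c
    · simp only [colour, if_pos h]
      omega
    · simp only [colour, if_neg h]
      have := col_lt (k := n + 2) (by omega) n (fun t => s (en Y (i + t) - p))
        ((hs1 _ (by simp only [add_zero] at h ⊢; omega) (hyJ i hi)).2.trans_lt htower)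
      omega
  have hwin : ∀ i, i + (n + 2) ≤ Y.card →
      colour (en (window Y (n + 2) i)) = colour (fun t => en Y (i + t)) := by
    intro i hi
    have h0 := en_window hi (show 0 < n + 2 by omega)
    have h1 : col n (fun t => s (en (window Y (n + 2) i) t - p)) =
        col n fun t => s (en Y (i + t) - p) :=
      col_congr n _ _ fun t ht => by rw [en_window hi (by omega)]
    simp only [colour, h0, h1]
  have hconst : ∀ i, i + (n + 2) ≤ Y.card →
      colour (fun t => en Y (i + t)) = colour (fun t => en Y (0 + t)) := by
    intro i hi
    have h0 : 0 + (n + 2) ≤ Y.card := by omega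
    have := Fin.mk.inj_iff.1 (hhom _ _ (window_subset hi) (window_subset h0) (card_window hi)
      (card_window h0))
    rw [hwin i hi, hwin 0 h0, Nat.mod_eq_of_lt (hbound i (by omega)),
      Nat.mod_eq_of_lt (hbound 0 (by omega))] at this
    exact this
  have hstart : c ≤ en Y 0 := by
    by_contra h
    have h1 := hconst 1 (by omega)
    have h2 := en_lt (s := Y) (show 0 < 1 by omega) (by omega)
    simp only [colour, add_zero] at h1
    split_ifs at h1 <;> omega
  have hge : ∀ t, t < Y.card → c ≤ en Y t := fun t ht => by
    rcases Nat.eq_zero_or_pos t with rfl | h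
    · exact hstart
    · exact hstart.trans (en_lt h ht).le
  have hb := hs1 (en Y 0 - p) (by omega) (hyJ 0 (by omega))
  have := le_of_col_const (k := n + 2) (by omega) n (fun t => s (en Y t - p)) Y.card (en Y 0 - p)
    (fun t ht => by
      have h1 := hge t (by omega)
      have h2 : en Y t < en Y (t + 1) := en_lt (Nat.lt_succ_self t) ht
      exact hs2 _ _ (by omega) (by omega) (hyJ _ ht))
    hb.1 (hb.2.trans_lt htower) (fun t ht => by
      have h1 := hconst t (by omega)
      have h2 := hge t (by omega)
      simp only [colour, add_zero, zero_add] at h1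
      rw [if_neg (by omega), if_neg (by omega)] at h1
      omega)
  omega

/-- For every natural number `n ≥ 15`, `F_{ε₀}(n) ≤ σ(n+2, 10^(35n²))`. -/
theorem stmt0 : ∀ n : ℕ, 15 ≤ n → Feps0 n ≤ sigmaPH (n + 2) (10 ^ (35 * n ^ 2)) := by
  intro n hn
  have hK : (n + 2) ^ 2 + 4 * n + 4 ≤ 10 ^ (35 * n ^ 2) := by
    have h1 : 35 * n ^ 2 < 10 ^ (35 * n ^ 2) := Nat.lt_pow_self (by norm_num)
    nlinarith
  exact le_csInf (exists_PH _ _ _) fun N hN => Feps0_le_of_PH hK hN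

end
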